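/- Let $U$ be a convex subset of a real normed space with $\|u-u'\|\le R$ for all $u,u'\in U$, let $F:U\to\mathbb{R}$ be convex and $L$-Lipschitz on $U$ for a constant $L\ge 0$ (that is, $|F(u)-F(v)|\le L\|u-v\|$ for all $u,v\in U$), and let $G:U\to\mathbb{R}$ be convex. Suppose Slater's condition holds: there exist $u_0\in U$ and $\delta>0$ with $G(u_0)\le-\delta$. Fix $\varepsilon$ with $0<\varepsilon<\delta$. If $u^*$ minimizes $F$ over $\{u\in U: G(u)\le 0\}$ and $u^{*,\varepsilon}$ minimizes $F$ over $\{u\in U: G(u)\le-\varepsilon\}$, then $F(u^{*,\varepsilon})-F(u^*)\le LR\varepsilon/\delta$. -/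

import Mathlib

open scoped NNReal

/-!
Moving a feasible point `u` towards the Slater point by the fraction `ε / δ` of the way reaches the
tightened feasible set, because convexity lowers `G` by at least `ε`. The move has length at most
`R ε / δ`, so it changes the `L`-Lipschitz function `F` by at most `L R ε / δ`.
-/

theorem lineMap_mem_sublevel_of_convexOn {𝕜 E β : Type*} [Ring 𝕜] [PartialOrder 𝕜]
    [AddRightMono 𝕜] [AddCommGroup E] [Module 𝕜 E] [AddCommGroup β] [PartialOrder β]
    [IsOrderedAddMonoid β] [Module 𝕜 β] [PosSMulMono 𝕜 β] {s : Set E} {g : E → β} {x y : E}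
    {a b : β} {t : 𝕜} (hg : ConvexOn 𝕜 s g) (hx : x ∈ {u ∈ s | g u ≤ a})
    (hy : y ∈ {u ∈ s | g u ≤ b}) (ht : t ∈ Set.Icc 0 1) :
    AffineMap.lineMap x y t ∈ {u ∈ s | g u ≤ AffineMap.lineMap a b t} :=
  hg.convex_epigraph.lineMap_mem (x := (x, a)) (y := (y, b)) hx hy ht

theorem exists_mem_sublevel_dist_le_of_convexOn {E : Type*} [SeminormedAddCommGroup E]
    [NormedSpace ℝ E] {s : Set E} {g : E → ℝ} {x y : E} {a b c : ℝ} (hg : ConvexOn ℝ s g)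
    (hx : x ∈ {u ∈ s | g u ≤ a}) (hy : y ∈ {u ∈ s | g u ≤ b})
    (hba : b < a) (hbc : b ≤ c) (hca : c ≤ a) :
    ∃ z ∈ {u ∈ s | g u ≤ c}, dist z x ≤ (a - c) / (a - b) * dist x y := by
  have hab : 0 < a - b := sub_pos.2 hba
  have ht₀ : 0 ≤ (a - c) / (a - b) := div_nonneg (sub_nonneg.2 hca) hab.le
  have ht₁ : (a - c) / (a - b) ≤ 1 := (div_le_one hab).2 (sub_le_sub_left hbc a)
  have hc : AffineMap.lineMap a b ((a - c) / (a - b)) = c := by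
    rw [AffineMap.lineMap_apply_ring']
    field_simp
    ring
  refine ⟨AffineMap.lineMap x y ((a - c) / (a - b)), ?_, ?_⟩
  · simpa only [hc] using lineMap_mem_sublevel_of_convexOn hg hx hy ⟨ht₀, ht₁⟩
  · rw [dist_lineMap_left, Real.norm_of_nonneg ht₀]

theorem sub_le_mul_dist_of_isMinOn_of_lipschitzOnWith {α : Type*} [PseudoMetricSpace α]
    {f : α → ℝ} {s t : Set α} {K : ℝ≥0} {m x z : α} (hf : LipschitzOnWith K f s)
    (hm : IsMinOn f t m) (hx : x ∈ s) (hzs : z ∈ s) (hzt : z ∈ t) :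
    f m - f x ≤ K * dist z x :=
  calc f m - f x ≤ f z - f x := sub_le_sub_right (hm hzt) _
    _ ≤ dist (f z) (f x) := Real.sub_le_dist _ _
    _ ≤ K * dist z x := hf.dist_le_mul z hzs x hx

theorem stmt2_general {E : Type*} [SeminormedAddCommGroup E] [NormedSpace ℝ E] {U : Set E}
    {F G : E → ℝ} {L : ℝ≥0} {R δ ε : ℝ} {u₀ u ueps : E} (hL : LipschitzOnWith L F U)
    (hG : ConvexOn ℝ U G) (hδ : 0 < δ) (hε : 0 ≤ ε) (hεδ : ε ≤ δ)
    (hu₀ : u₀ ∈ {u ∈ U | G u ≤ -δ}) (hu : u ∈ {u ∈ U | G u ≤ 0}) (hR : ‖u - u₀‖ ≤ R)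
    (hmineps : IsMinOn F {u ∈ U | G u ≤ -ε} ueps) :
    F ueps - F u ≤ L * R * ε / δ := by
  obtain ⟨v, hv, hvu⟩ := exists_mem_sublevel_dist_le_of_convexOn hG hu hu₀
    (neg_lt_zero.2 hδ) (neg_le_neg hεδ) (neg_nonpos.2 hε)
  rw [zero_sub, zero_sub, neg_neg, neg_neg, dist_eq_norm u u₀] at hvu
  calc F ueps - F u ≤ L * dist v u :=
        sub_le_mul_dist_of_isMinOn_of_lipschitzOnWith hL hmineps hu.1 hv.1 hv
    _ ≤ L * (ε / δ * ‖u - u₀‖) := by gcongr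
    _ ≤ L * (ε / δ * R) := by gcongr
    _ = L * R * ε / δ := by ring

/-- Comparison of a convex problem with its `ε`-tightened version: if `ustar` minimizes the convex
`L`-Lipschitz function `F` over `{u ∈ U | G u ≤ 0}` and `ueps` minimizes `F` over
`{u ∈ U | G u ≤ -ε}`, with a Slater point `G u₀ ≤ -δ`, `0 < ε < δ`, and all distances in `U` at
most `R`, then `F ueps - F ustar ≤ L R ε / δ`. -/
theorem stmt2 {E : Type*} [NormedAddCommGroup E] [NormedSpace ℝ E]
    (U : Set E) (hU : Convex ℝ U)
    (R : ℝ) (hR : ∀ u ∈ U, ∀ u' ∈ U, ‖u - u'‖ ≤ R)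
    (F G : E → ℝ) (hF : ConvexOn ℝ U F)
    (L : ℝ≥0) (hL : LipschitzOnWith L F U)
    (hG : ConvexOn ℝ U G)
    (δ : ℝ) (hδ : 0 < δ) (hslater : ∃ u₀ ∈ U, G u₀ ≤ -δ)
    (ε : ℝ) (hε : 0 < ε) (hεδ : ε < δ)
    (ustar : E) (hustar : ustar ∈ {u ∈ U | G u ≤ 0})
    (hmin : IsMinOn F {u ∈ U | G u ≤ 0} ustar)
    (ueps : E) (hueps : ueps ∈ {u ∈ U | G u ≤ -ε})
    (hmineps : IsMinOn F {u ∈ U | G u ≤ -ε} ueps) :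
    F ueps - F ustar ≤ (L : ℝ) * R * ε / δ := by
  obtain ⟨u₀, hu₀, hGu₀⟩ := hslater
  exact stmt2_general hL hG hδ hε.le hεδ.le ⟨hu₀, hGu₀⟩ hustar (hR ustar hustar.1 u₀ hu₀) hmineps
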